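/- Let q ∈ L^1_loc(ℝ : X) be S^1-bounded, let g ∈ L^1(ℝ), and let q ∈ B^1WPAA_0(ℝ, X, ρ₁, ρ₂). Then the convolution g∗q, given by (g∗q)(t) = ∫_{-∞}^{∞} g(t−r) q(r) dr, belongs to B^1WPAA_0(ℝ, X, ρ₁, ρ₂). -/

import Mathlib

open MeasureTheory Filter Set

theorem aux_bound (h : ℝ → ℝ) (h0 : ∀ x, 0 ≤ h x)
    (hi : ∀ a b : ℝ, IntervalIntegrable h volume a b) (C : ℝ)
    (hC : ∀ t : ℝ, (∫ s in t..(t + 1), h s) ≤ C) (a b : ℝ) :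
    |∫ s in a..b, h s| ≤ C * (|b - a| + 1) := by
  have hC0 : 0 ≤ C := le_trans
    (intervalIntegral.integral_nonneg (by norm_num) (fun u _ => h0 u)) (hC 0)
  have key : ∀ (n : ℕ) (a : ℝ), (∫ s in a..(a + n), h s) ≤ n * C := by
    intro n
    induction n with
    | zero => intro a; simp
    | succ k ih =>
      intro a
      have h1 := intervalIntegral.integral_add_adjacent_intervals (hi a (a + k))
        (hi (a + k) (a + k + 1))
      have h2 := hC (a + k)
      have h3 := ih a
      push_cast
      rw [← add_assoc, ← h1]
      linarith
  have main : ∀ a b : ℝ, a ≤ b → |∫ s in a..b, h s| ≤ C * (|b - a| + 1) := by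
    intro a b hab
    rw [abs_of_nonneg (intervalIntegral.integral_nonneg hab (fun u _ => h0 u)),
      abs_of_nonneg (sub_nonneg.2 hab)]
    have h1 := Nat.le_ceil (b - a)
    have h2 := (Nat.ceil_lt_add_one (sub_nonneg.2 hab)).le
    have h3 := key ⌈b - a⌉₊ a
    have h4 := intervalIntegral.integral_add_adjacent_intervals (hi a b)
        (hi b (a + (⌈b - a⌉₊ : ℝ)))
    have h5 : 0 ≤ ∫ s in b..(a + (⌈b - a⌉₊ : ℝ)), h s :=
      intervalIntegral.integral_nonneg (by linarith) (fun u _ => h0 u)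
    nlinarith
  rcases le_total a b with hab | hab
  · exact main a b hab
  · rw [intervalIntegral.integral_symm, abs_neg, abs_sub_comm]
    exact main b a hab

theorem aux_limsup (A B e : ℝ → ℝ) (c : ℝ) (hc : 0 ≤ c) (K : ℝ)
    (hA : ∀ᶠ l in atTop, A l ≤ K) (hB : ∀ᶠ l in atTop, 0 ≤ B l)
    (he : Tendsto e atTop (nhds 0)) (hle : ∀ᶠ l in atTop, B l ≤ c * A l + e l) :
    limsup B atTop ≤ c * limsup A atTop := by
  apply le_of_forall_pos_le_add
  intro ε hε
  have hcp : 0 < c + 1 := by linarith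
  have h1 : limsup A atTop < limsup A atTop + ε / (c + 1) := by
    have : 0 < ε / (c + 1) := by positivity
    linarith
  have h2 := eventually_lt_of_limsup_lt h1 (isBoundedUnder_of_eventually_le hA)
  have h3 := he.eventually (gt_mem_nhds (show 0 < ε / (c + 1) by positivity))
  refine limsup_le_of_le ?_ ?_
  · exact (isBoundedUnder_of_eventually_ge hB).isCoboundedUnder_le
  · filter_upwards [h2, h3, hle] with l a1 a2 a3
    have : c * A l ≤ c * (limsup A atTop + ε / (c + 1)) :=
      mul_le_mul_of_nonneg_left a1.le hc
    have e1 : ε = c * (ε / (c + 1)) + ε / (c + 1) := by field_simp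
    rw [mul_add] at this
    linarith

theorem aux_limsup_nonneg (B : ℝ → ℝ) (K : ℝ)
    (hA : ∀ᶠ l in atTop, B l ≤ K) (hB : ∀ᶠ l in atTop, 0 ≤ B l) :
    0 ≤ limsup B atTop :=
  le_limsup_of_frequently_le hB.frequently (isBoundedUnder_of_eventually_le hA)

theorem aux_A_le (h : ℝ → ℝ) (h0 : ∀ x, 0 ≤ h x)
    (hi : ∀ a b : ℝ, IntervalIntegrable h volume a b) (C : ℝ)
    (hC : ∀ t : ℝ, (∫ s in t..(t + 1), h s) ≤ C) (x l : ℝ) (hl : 1 ≤ l) :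
    |1 / (2 * l) * ∫ s in (x - l)..(x + l), h s| ≤ 2 * C := by
  have hC0 : 0 ≤ C := le_trans
    (intervalIntegral.integral_nonneg (by norm_num) (fun u _ => h0 u)) (hC 0)
  have h1 := aux_bound h h0 hi C hC (x - l) (x + l)
  rw [show x + l - (x - l) = 2 * l by ring, abs_of_pos (show 0 < 2 * l by linarith)] at h1
  rw [abs_mul, abs_of_pos (show 0 < 1 / (2 * l) by positivity), one_div_mul_eq_div,
    div_le_iff₀ (by linarith)]
  nlinarith

theorem aux_A_diff (h : ℝ → ℝ) (h0 : ∀ x, 0 ≤ h x)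
    (hi : ∀ a b : ℝ, IntervalIntegrable h volume a b) (C : ℝ)
    (hC : ∀ t : ℝ, (∫ s in t..(t + 1), h s) ≤ C) (x y : ℝ) :
    Tendsto (fun l : ℝ => (1 / (2 * l) * ∫ s in (x - l)..(x + l), h s)
      - 1 / (2 * l) * ∫ s in (y - l)..(y + l), h s) atTop (nhds 0) := by
  have ht : Tendsto (fun l : ℝ => (C * (|x - y| + 1)) / l) atTop (nhds 0) :=
    tendsto_const_nhds.div_atTop tendsto_id
  refine squeeze_zero_norm' ?_ ht
  filter_upwards [eventually_ge_atTop 1] with l hl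
  have e1 : (∫ s in (x - l)..(x + l), h s) - ∫ s in (y - l)..(y + l), h s
      = (∫ s in (y + l)..(x + l), h s) - ∫ s in (y - l)..(x - l), h s := by
    have a1 := intervalIntegral.integral_add_adjacent_intervals (hi (y - l) (x - l))
      (hi (x - l) (x + l))
    have a2 := intervalIntegral.integral_add_adjacent_intervals (hi (y - l) (y + l))
      (hi (y + l) (x + l))
    linarith
  have b1 := aux_bound h h0 hi C hC (y + l) (x + l)
  have b2 := aux_bound h h0 hi C hC (y - l) (x - l)
  rw [show x + l - (y + l) = x - y by ring] at b1
  rw [show x - l - (y - l) = x - y by ring] at b2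
  rw [← mul_sub, e1, Real.norm_eq_abs, abs_mul, abs_of_pos (show 0 < 1 / (2 * l) by positivity),
    one_div_mul_eq_div, div_le_div_iff₀ (by linarith) (by linarith)]
  have := abs_sub (∫ s in (y + l)..(x + l), h s) (∫ s in (y - l)..(x - l), h s)
  nlinarith

theorem aux_cont (h : ℝ → ℝ) (hi : ∀ a b : ℝ, IntervalIntegrable h volume a b) (l t : ℝ) :
    Continuous (fun u : ℝ => ∫ s in (t - u - l)..(t - u + l), h s) := by
  have hP := intervalIntegral.continuous_primitive hi 0
  have : (fun u : ℝ => ∫ s in (t - u - l)..(t - u + l), h s) =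
      fun u => (∫ s in (0:ℝ)..(t - u + l), h s) - ∫ s in (0:ℝ)..(t - u - l), h s := by
    funext u
    rw [intervalIntegral.integral_interval_sub_left (hi _ _) (hi _ _)]
  rw [this]
  exact (hP.comp (by fun_prop : Continuous fun u : ℝ => t - u + l)).sub
    (hP.comp (by fun_prop : Continuous fun u : ℝ => t - u - l))

theorem aux_fubini {X : Type*} [NormedAddCommGroup X] [NormedSpace ℂ X]
    (q : ℝ → X) (hqmeas : AEStronglyMeasurable q volume)
    (hi : ∀ a b : ℝ, IntervalIntegrable (fun t => ‖q t‖) volume a b) (C : ℝ)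
    (hC : ∀ t : ℝ, (∫ s in t..(t + 1), ‖q s‖) ≤ C)
    (g : ℝ → ℝ) (hg : Integrable g volume) (t l : ℝ) (hl : 1 ≤ l) :
    (∫ s in (t - l)..(t + l), ‖∫ r : ℝ, g (s - r) • q r‖) ≤
      ∫ u : ℝ, |g u| * ∫ s in (t - u - l)..(t - u + l), ‖q s‖ := by
  have hle : t - l ≤ t + l := by linarith
  have e1 : ∀ s : ℝ, ∀ u : ℝ,
      ‖g u • q (s - u)‖ = |g u| * ‖q (s - u)‖ := by
    intro s u; rw [norm_smul, Real.norm_eq_abs]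
  have b1 : ∀ s : ℝ, ‖∫ r : ℝ, g (s - r) • q r‖ ≤ ∫ u : ℝ, |g u| * ‖q (s - u)‖ := by
    intro s
    have := integral_sub_left_eq_self (fun r : ℝ => g (s - r) • q r) volume s
    rw [← this]
    simp only [sub_sub_cancel]
    refine (norm_integral_le_integral_norm _).trans (le_of_eq ?_)
    simp only [e1]
  have einner : ∀ u : ℝ, (∫ s in Ioc (t - l) (t + l), |g u| * ‖q (s - u)‖) =
      |g u| * ∫ s in (t - u - l)..(t - u + l), ‖q s‖ := by
    intro u
    rw [integral_const_mul, ← intervalIntegral.integral_of_le hle,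
      intervalIntegral.integral_comp_sub_right (fun s => ‖q s‖)]
    rw [show t - l - u = t - u - l by ring, show t + l - u = t - u + l by ring]
  have hmeas : AEStronglyMeasurable (fun p : ℝ × ℝ => |g p.2| * ‖q (p.1 - p.2)‖)
      ((volume.restrict (Ioc (t - l) (t + l))).prod volume) := by
    have m1 : AEStronglyMeasurable (fun p : ℝ × ℝ => |g p.2| * ‖q (p.1 - p.2)‖)
        ((volume : Measure ℝ).prod volume) := by
      refine AEStronglyMeasurable.mul ?_ ?_
      · exact hg.abs.aestronglyMeasurable.comp_snd
      · exact hqmeas.norm.comp_quasiMeasurePreserving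
          (quasiMeasurePreserving_sub_of_right_invariant volume volume)
    refine m1.mono_measure ?_
    have := Measure.prod_restrict (μ := (volume : Measure ℝ)) (ν := (volume : Measure ℝ))
      (Ioc (t - l) (t + l)) univ
    rw [Measure.restrict_univ] at this
    rw [this]
    exact Measure.restrict_le_self
  have hint : Integrable (fun p : ℝ × ℝ => |g p.2| * ‖q (p.1 - p.2)‖)
      ((volume.restrict (Ioc (t - l) (t + l))).prod volume) := by
    rw [integrable_prod_iff' hmeas]
    constructor
    · refine Eventually.of_forall fun u => ?_
      change Integrable (fun x => |g u| * ‖q (x - u)‖) (volume.restrict (Ioc (t - l) (t + l)))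
      refine Integrable.const_mul ?_ _
      have := (hi (t - l - u) (t + l - u)).comp_sub_right u
      simp only [sub_add_cancel] at this
      exact (intervalIntegrable_iff_integrableOn_Ioc_of_le hle).1 this
    · have : (fun y : ℝ => ∫ x in Ioc (t - l) (t + l), ‖|g y| * ‖q (x - y)‖‖) =
          fun u => |g u| * ∫ s in (t - u - l)..(t - u + l), ‖q s‖ := by
        funext u
        rw [← einner u]
        simp
      simp only [this]
      refine hg.abs.mul_bdd (c := C * (2 * l + 1))
        (aux_cont (fun s => ‖q s‖) hi l t).aestronglyMeasurable ?_
      refine Eventually.of_forall fun u => ?_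
      have := aux_bound (fun s => ‖q s‖) (fun _ => norm_nonneg _) hi C hC (t - u - l) (t - u + l)
      rw [show t - u + l - (t - u - l) = 2 * l by ring,
        abs_of_pos (show 0 < 2 * l by linarith)] at this
      exact this
  rw [intervalIntegral.integral_of_le hle]
  calc _ ≤ ∫ s in Ioc (t - l) (t + l), ∫ u : ℝ, |g u| * ‖q (s - u)‖ :=
        integral_mono_of_nonneg (Eventually.of_forall fun _ => norm_nonneg _)
          hint.integral_prod_left (Eventually.of_forall b1)
    _ = ∫ u : ℝ, ∫ s in Ioc (t - l) (t + l), |g u| * ‖q (s - u)‖ :=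
        integral_integral_swap hint
    _ = _ := by simp only [einner]

theorem aux_main {X : Type*} [NormedAddCommGroup X] [NormedSpace ℂ X]
    (q : ℝ → X) (hqmeas : AEStronglyMeasurable q volume)
    (hi : ∀ a b : ℝ, IntervalIntegrable (fun t => ‖q t‖) volume a b) (C : ℝ)
    (hC : ∀ t : ℝ, (∫ s in t..(t + 1), ‖q s‖) ≤ C)
    (g : ℝ → ℝ) (hg : Integrable g volume) (t : ℝ) :
    0 ≤ limsup (fun l : ℝ =>
        1 / (2 * l) * ∫ s in (t - l)..(t + l), ‖∫ r : ℝ, g (s - r) • q r‖) atTop ∧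
    limsup (fun l : ℝ =>
        1 / (2 * l) * ∫ s in (t - l)..(t + l), ‖∫ r : ℝ, g (s - r) • q r‖) atTop ≤
      (∫ u, |g u|) * limsup (fun l : ℝ =>
        1 / (2 * l) * ∫ s in (t - l)..(t + l), ‖q s‖) atTop := by
  set A : ℝ → ℝ → ℝ := fun x l => 1 / (2 * l) * ∫ s in (x - l)..(x + l), ‖q s‖ with hAdef
  have hAb : ∀ x l : ℝ, 1 ≤ l → |A x l| ≤ 2 * C := fun x l hl =>
    aux_A_le (fun s => ‖q s‖) (fun _ => norm_nonneg _) hi C hC x l hl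
  have hAc : ∀ l : ℝ, Continuous (fun u => A (t - u) l) := fun l =>
    (aux_cont (fun s => ‖q s‖) hi l t).const_mul _
  set B : ℝ → ℝ := fun l =>
    1 / (2 * l) * ∫ s in (t - l)..(t + l), ‖∫ r : ℝ, g (s - r) • q r‖ with hBdef
  have hB0 : ∀ᶠ l in atTop, 0 ≤ B l := by
    filter_upwards [eventually_ge_atTop 1] with l hl
    exact mul_nonneg (by positivity)
      (intervalIntegral.integral_nonneg (by linarith) (fun u _ => norm_nonneg _))
  have hgA : ∀ l : ℝ, 1 ≤ l → Integrable (fun u => |g u| * A (t - u) l) := fun l hl =>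
    hg.abs.mul_bdd (c := 2 * C) (hAc l).aestronglyMeasurable
      (Eventually.of_forall fun u => hAb _ l hl)
  have hBle : ∀ l : ℝ, 1 ≤ l → B l ≤ ∫ u, |g u| * A (t - u) l := by
    intro l hl
    have h1 := aux_fubini q hqmeas hi C hC g hg t l hl
    have h2 := mul_le_mul_of_nonneg_left h1 (show 0 ≤ 1 / (2 * l) by positivity)
    refine h2.trans (le_of_eq ?_)
    rw [← integral_const_mul]
    congr 1
    funext u
    simp only [hAdef]
    ring
  set e : ℝ → ℝ := fun l => ∫ u, |g u| * (A (t - u) l - A t l) with hedef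
  have he : Tendsto e atTop (nhds 0) := by
    have : Tendsto e atTop (nhds (∫ u : ℝ, (0 : ℝ))) := by
      refine tendsto_integral_filter_of_dominated_convergence (fun u => |g u| * (4 * C)) ?_ ?_ ?_ ?_
      · exact Eventually.of_forall fun l => hg.abs.aestronglyMeasurable.mul
          ((hAc l).sub continuous_const).aestronglyMeasurable
      · filter_upwards [eventually_ge_atTop 1] with l hl
        refine Eventually.of_forall fun u => ?_
        rw [Real.norm_eq_abs, abs_mul, abs_abs]
        refine mul_le_mul_of_nonneg_left ?_ (abs_nonneg _)
        have := abs_sub (A (t - u) l) (A t l)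
        linarith [hAb (t - u) l hl, hAb t l hl]
      · exact hg.abs.mul_const _
      · refine Eventually.of_forall fun u => ?_
        have := (aux_A_diff (fun s => ‖q s‖) (fun _ => norm_nonneg _) hi C hC (t - u) t).const_mul
          |g u|
        rwa [mul_zero] at this
    simpa using this
  have hle : ∀ᶠ l in atTop, B l ≤ (∫ u, |g u|) * A t l + e l := by
    filter_upwards [eventually_ge_atTop 1] with l hl
    refine (hBle l hl).trans (le_of_eq ?_)
    have : e l = (∫ u, |g u| * A (t - u) l) - ∫ u, |g u| * A t l := by
      rw [← integral_sub (hgA l hl) (hg.abs.mul_const _)]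
      simp only [hedef, mul_sub]
    rw [this, integral_mul_const]
    ring
  have hG : 0 ≤ ∫ u, |g u| := integral_nonneg fun _ => abs_nonneg _
  have hAK : ∀ᶠ l in atTop, A t l ≤ 2 * C := by
    filter_upwards [eventually_ge_atTop 1] with l hl
    exact (le_abs_self _).trans (hAb t l hl)
  refine ⟨aux_limsup_nonneg B ((∫ u, |g u|) * (2 * C) + 1) ?_ hB0,
    aux_limsup (A t) B e _ hG (2 * C) hAK hB0 he hle⟩
  filter_upwards [hle, hAK, he.eventually (gt_mem_nhds zero_lt_one)] with l a1 a2 a3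
  have := mul_le_mul_of_nonneg_left a2 hG
  linarith

theorem aux_const (h : ℝ → ℝ) (h0 : ∀ x, 0 ≤ h x)
    (hi : ∀ a b : ℝ, IntervalIntegrable h volume a b) (C : ℝ)
    (hC : ∀ t : ℝ, (∫ s in t..(t + 1), h s) ≤ C) (x y : ℝ) :
    limsup (fun l : ℝ => 1 / (2 * l) * ∫ s in (x - l)..(x + l), h s) atTop ≤
    limsup (fun l : ℝ => 1 / (2 * l) * ∫ s in (y - l)..(y + l), h s) atTop := by
  have := aux_limsup (fun l : ℝ => 1 / (2 * l) * ∫ s in (y - l)..(y + l), h s)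
    (fun l : ℝ => 1 / (2 * l) * ∫ s in (x - l)..(x + l), h s) _ 1 zero_le_one (2 * C) ?_ ?_
    (aux_A_diff h h0 hi C hC x y) ?_
  · simpa using this
  · filter_upwards [eventually_ge_atTop 1] with l hl
    exact (le_abs_self _).trans (aux_A_le h h0 hi C hC y l hl)
  · filter_upwards [eventually_ge_atTop 1] with l hl
    exact mul_nonneg (by positivity)
      (intervalIntegral.integral_nonneg (by linarith) (fun u _ => h0 u))
  · exact Eventually.of_forall fun l => by simp



/-- A weight of class `U_∞`: locally integrable, a.e. positive, and
`∫_{-T}^{T} ρ(t) dt → ∞` as `T → +∞`. -/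
def IsWeightUInfty (ρ : ℝ → ℝ) : Prop :=
  (∀ a b : ℝ, IntervalIntegrable ρ MeasureTheory.volume a b) ∧
  (∀ᵐ t : ℝ ∂MeasureTheory.volume, 0 < ρ t) ∧
  Filter.Tendsto (fun T : ℝ => ∫ t in (-T)..T, ρ t) Filter.atTop Filter.atTop

/-- Membership in `B^1WPAA_0(ℝ, X, ρ₁, ρ₂)`:
`lim_{T→+∞} (1/(2∫_{-T}^{T} ρ₁)) ∫_{-T}^{T} [limsup_{l→+∞} (1/(2l)) ∫_{t-l}^{t+l} ‖q(s)‖ ds] ρ₂(t) dt = 0`. -/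
def MemB1WPAA0 {X : Type*} [NormedAddCommGroup X] (ρ₁ ρ₂ : ℝ → ℝ) (q : ℝ → X) : Prop :=
  Filter.Tendsto (fun T : ℝ =>
      (1 / (2 * ∫ t in (-T)..T, ρ₁ t)) *
        ∫ t in (-T)..T,
          (Filter.limsup (fun l : ℝ =>
            (1 / (2 * l)) * ∫ s in (t - l)..(t + l), ‖q s‖) Filter.atTop) * ρ₂ t)
    Filter.atTop (nhds 0)

/-- If `q` is `S¹`-bounded, `g ∈ L¹(ℝ)` and `q ∈ B^1WPAA_0(ℝ, X, ρ₁, ρ₂)`,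
then the convolution `g∗q`, `(g∗q)(t) = ∫_{-∞}^{∞} g(t-r) q(r) dr`, belongs to
`B^1WPAA_0(ℝ, X, ρ₁, ρ₂)`. -/
theorem convolution_invariance_B1WPAA0
    {X : Type*} [NormedAddCommGroup X] [NormedSpace ℂ X] [CompleteSpace X]
    (ρ₁ ρ₂ : ℝ → ℝ) (hρ₁ : IsWeightUInfty ρ₁) (hρ₂ : IsWeightUInfty ρ₂)
    (q : ℝ → X) (hqmeas : AEStronglyMeasurable q volume)
    (hqloc : ∀ a b : ℝ, IntervalIntegrable (fun t => ‖q t‖) volume a b)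
    (hS1 : ∃ C : ℝ, ∀ t : ℝ, (∫ s in t..(t + 1), ‖q s‖) ≤ C)
    (g : ℝ → ℝ) (hg : Integrable g volume)
    (hq : MemB1WPAA0 ρ₁ ρ₂ q) :
    MemB1WPAA0 ρ₁ ρ₂ (fun t : ℝ => ∫ r : ℝ, g (t - r) • q r) := by
  obtain ⟨C, hC⟩ := hS1
  have hm := aux_main q hqmeas hqloc C hC g hg
  have hcst : ∀ t : ℝ, limsup (fun l : ℝ =>
        1 / (2 * l) * ∫ s in (t - l)..(t + l), ‖q s‖) atTop = limsup (fun l : ℝ =>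
        1 / (2 * l) * ∫ s in ((0 : ℝ) - l)..(0 + l), ‖q s‖) atTop := fun t =>
    le_antisymm (aux_const (fun s => ‖q s‖) (fun _ => norm_nonneg _) hqloc C hC t 0)
      (aux_const (fun s => ‖q s‖) (fun _ => norm_nonneg _) hqloc C hC 0 t)
  unfold MemB1WPAA0 at hq ⊢
  have hq2 := hq.const_mul (∫ u, |g u|)
  rw [mul_zero] at hq2
  simp only [hcst] at hq2 hm
  generalize limsup (fun l : ℝ =>
        1 / (2 * l) * ∫ s in ((0 : ℝ) - l)..(0 + l), ‖q s‖) atTop = M at hq2 hm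
  refine squeeze_zero' ?_ ?_ hq2
  · filter_upwards [eventually_ge_atTop (0 : ℝ), hρ₁.2.2.eventually (eventually_ge_atTop (0 : ℝ))] with T hT h1
    refine mul_nonneg (by positivity) ?_
    have hle : -T ≤ T := by linarith
    rw [intervalIntegral.integral_of_le hle]
    refine integral_nonneg_of_ae ?_
    filter_upwards [ae_restrict_of_ae hρ₂.2.1] with t ht
    exact mul_nonneg (hm t).1 ht.le
  · filter_upwards [eventually_ge_atTop (0 : ℝ), hρ₁.2.2.eventually (eventually_ge_atTop (0 : ℝ))] with T hT h1
    rw [mul_left_comm, ← intervalIntegral.integral_const_mul (∫ u, |g u|)]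
    have hp : 0 ≤ 1 / (2 * ∫ t in (-T)..T, ρ₁ t) := by positivity
    refine mul_le_mul_of_nonneg_left ?_ hp
    have hle : -T ≤ T := by linarith
    rw [intervalIntegral.integral_of_le hle, intervalIntegral.integral_of_le hle]
    refine integral_mono_of_nonneg ?_ ?_ ?_
    · filter_upwards [ae_restrict_of_ae hρ₂.2.1] with t ht
      exact mul_nonneg (hm t).1 ht.le
    · exact ((hρ₂.1 (-T) T).1.const_mul M).const_mul _
    · filter_upwards [ae_restrict_of_ae hρ₂.2.1] with t ht
      have := mul_le_mul_of_nonneg_right (hm t).2 ht.le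
      linarith
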